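/- arXiv:1012.2401 — 2 statements merged into one kernel-verified Lean document; each statement's English description precedes it below -/
import Mathlib

section
/- Let f : ℝ^n → ℝ be bounded and measurable, and C^{1,1} on B_1^0. For x ∈ ℝ^n and y > 0 define u(x,y) = ∫_{ℝ^n} f(x+z) P(z,y) dz, where P(z,y) = C_{n,a} y^{1−a} (|z|² + y²)^{−(n+1−a)/2} and C_{n,a} > 0 is the constant for which ∫_{ℝ^n} P(z,y) dz = 1 for every y > 0. For x ∈ B_{1/2}^0 define g(x) = C_{n,a} ∫_{ℝ^n} (f(x+z) − f(x)) |z|^{−(n+1−a)} dz; this integral converges absolutely. Then there is a constant C depending only on n and a such that for all x ∈ B_{1/2}^0 and all y > 0: |u(x,y) − f(x) − y^{1−a} g(x)| ≤ C y² ( sup_{ℝ^n} |f| + ‖f‖_{C^{1,1}(B_1^0)} ). -/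
open Set Filter Topology MeasureTheory
open scoped RealInnerProductSpace

noncomputable section

abbrev En (n : ℕ) := EuclideanSpace ℝ (Fin n)

/-- The open upper half ball `B_r^+`. -/
def halfBall (n : ℕ) (r : ℝ) : Set (En n × ℝ) :=
  {p | ‖p.1‖ ^ 2 + p.2 ^ 2 < r ^ 2 ∧ 0 < p.2}

/-- The closure of the upper half ball. -/
def closedHalfBall (n : ℕ) (r : ℝ) : Set (En n × ℝ) :=
  {p | ‖p.1‖ ^ 2 + p.2 ^ 2 ≤ r ^ 2 ∧ 0 ≤ p.2}

/-- `B_r^+ ∪ B_r^0`. -/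
def halfBallWithBase (n : ℕ) (r : ℝ) : Set (En n × ℝ) :=
  {p | ‖p.1‖ ^ 2 + p.2 ^ 2 < r ^ 2 ∧ 0 ≤ p.2}

/-- The flat ball `B_r^0` in `ℝⁿ`. -/
def flatBall (n : ℕ) (r : ℝ) : Set (En n) := {x | ‖x‖ < r}

/-- `(∂B_1)^+`. -/
def spherePlus (n : ℕ) : Set (En n × ℝ) := {p | ‖p.1‖ ^ 2 + p.2 ^ 2 = 1 ∧ 0 < p.2}

/-- closure of `(∂B_1)^+`. -/
def closedSpherePlus (n : ℕ) : Set (En n × ℝ) := {p | ‖p.1‖ ^ 2 + p.2 ^ 2 = 1 ∧ 0 ≤ p.2}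

/-- Second directional derivative of `u` at `p` in direction `v`. -/
def D2 {n : ℕ} (u : En n × ℝ → ℝ) (p v : En n × ℝ) : ℝ :=
  fderiv ℝ (fun q => fderiv ℝ u q v) p v

/-- The Laplacian in the `n+1` variables `(x, y)`. -/
def lap {n : ℕ} (u : En n × ℝ → ℝ) (p : En n × ℝ) : ℝ :=
  (∑ i : Fin n, D2 u p (EuclideanSpace.single i 1, 0)) + D2 u p (0, 1)

/-- `u` is `a`-harmonic on `Ω`: it is `C²` there and `Δu + (a/y) ∂_y u = 0`. -/
def IsAHarmonicOn {n : ℕ} (a : ℝ) (u : En n × ℝ → ℝ) (Ω : Set (En n × ℝ)) : Prop :=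
  ContDiffOn ℝ 2 u Ω ∧ ∀ p ∈ Ω, lap u p + (a / p.2) * fderiv ℝ u p (0, 1) = 0

/-- `lim_{y → 0⁺} y^a ∂_y w(x, y) = L`. -/
def NormalDerivLimit {n : ℕ} (a : ℝ) (w : En n × ℝ → ℝ) (x : En n) (L : ℝ) : Prop :=
  Tendsto (fun y : ℝ => y ^ a * fderiv ℝ w (x, y) (0, 1)) (𝓝[>] (0 : ℝ)) (𝓝 L)

/-- The boundary-restriction `(t, x) ↦ u(t, x, 0)`. -/
def bdryFun {n : ℕ} (u : ℝ → En n × ℝ → ℝ) : ℝ × En n → ℝ := fun q => u q.1 (q.2, 0)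

/-- A classical solution of the extended drift–diffusion equation on
`[-1,0] × closure (B_1^+)` with drift `b` and right-hand side `f`. -/
def IsExtDDSolution {n : ℕ} (a : ℝ) (b : ℝ → En n → En n) (f : ℝ → En n → ℝ)
    (u : ℝ → En n × ℝ → ℝ) : Prop :=
  ContinuousOn (fun q : ℝ × (En n × ℝ) => u q.1 q.2) (Icc (-1 : ℝ) 0 ×ˢ closedHalfBall n 1) ∧
  (∀ t ∈ Icc (-1 : ℝ) 0, IsAHarmonicOn a (u t) (halfBall n 1)) ∧
  (∀ q ∈ Ioc (-1 : ℝ) 0 ×ˢ flatBall n 1,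
      DifferentiableWithinAt ℝ (bdryFun u) (Ioc (-1 : ℝ) 0 ×ˢ flatBall n 1) q) ∧
  (∀ t x, (t, x) ∈ Ioc (-1 : ℝ) 0 ×ˢ flatBall n 1 →
      ∃ L : ℝ, NormalDerivLimit a (u t) x L ∧
        fderivWithin ℝ (bdryFun u) (Ioc (-1 : ℝ) 0 ×ˢ flatBall n 1) (t, x) (1, 0) +
          fderivWithin ℝ (bdryFun u) (Ioc (-1 : ℝ) 0 ×ˢ flatBall n 1) (t, x) (0, b t x) -
          L = f t x)

/-- A classical solution of the localized fractional heat equation on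
`[-1,0] × closure (B_1^+)`. -/
def IsFracHeatSolution {n : ℕ} (a : ℝ) (u : ℝ → En n × ℝ → ℝ) : Prop :=
  ContinuousOn (fun q : ℝ × (En n × ℝ) => u q.1 q.2) (Icc (-1 : ℝ) 0 ×ˢ closedHalfBall n 1) ∧
  (∀ t ∈ Icc (-1 : ℝ) 0, IsAHarmonicOn a (u t) (halfBall n 1)) ∧
  (∀ t ∈ Ioc (-1 : ℝ) 0, ∀ x ∈ flatBall n 1,
      DifferentiableWithinAt ℝ (fun τ => u τ (x, 0)) (Ioc (-1 : ℝ) 0) t ∧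
      NormalDerivLimit a (u t) x (derivWithin (fun τ => u τ (x, 0)) (Ioc (-1 : ℝ) 0) t))


/-! Fix `x` and let `κ_y(z) = |z|^{-(n+2s)} - (|z|² + y²)^{-(n+2s)/2}` be the amount by which
regularising the singular kernel at scale `y` lowers it. Since the Poisson kernel has total mass
one, the error of the expansion is exactly `-C_{n,a} y^{2s} ∫ (f(x+z) - f(x)) κ_y(z) dz`. The kernel
`κ_y` is even, so the first difference may be replaced by half the symmetric second difference,
which is `O(|z|²)`. By Bernoulli's inequality `|z|² κ_y(z)` is at most a constant times
`min(|z|², y²) |z|^{-(n+2s)}`, whose integral is a constant times `y^{2-2s}` by homogeneity. -/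

open Module Asymptotics

section RadialKernel

variable {p q r x y : ℝ}

/-- The difference `r^{-p} - (r² + y²)^{-p/2}` between the homogeneous kernel and its regularisation
at scale `y`, as a function of the radius `r`. At `r = 0` the first term has the junk value of
`0 ^ (-p)`. -/
def kernelDefect (p y r : ℝ) : ℝ := r ^ (-p) - (r ^ 2 + y ^ 2) ^ (-(p / 2))

lemma one_sub_one_add_rpow_neg_le (hx : -1 < x) (hq : 0 ≤ q) : 1 - (1 + x) ^ (-q) ≤ q * x := by
  have hx' : 0 < 1 + x := by linarith
  have hlog : Real.log (1 + x) ≤ x := by linarith [Real.log_le_sub_one_of_pos hx']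
  have hexp := Real.add_one_le_exp (Real.log (1 + x) * -q)
  rw [← Real.rpow_def_of_pos hx'] at hexp
  linarith [mul_le_mul_of_nonneg_left hlog hq]

lemma kernelDefect_eq_mul (hr : 0 < r) :
    kernelDefect p y r = r ^ (-p) * (1 - (1 + (y / r) ^ 2) ^ (-(p / 2))) := by
  have hpow : r ^ (-p) = (r ^ 2) ^ (-(p / 2)) := by
    rw [← Real.rpow_natCast, ← Real.rpow_mul hr.le]
    congr 1
    push_cast
    ring
  have hsum : r ^ 2 + y ^ 2 = r ^ 2 * (1 + (y / r) ^ 2) := by field_simp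
  rw [kernelDefect, hsum, Real.mul_rpow (by positivity) (by positivity), ← hpow]
  ring

lemma kernelDefect_nonneg (hp : 0 ≤ p) (hr : 0 < r) : 0 ≤ kernelDefect p y r := by
  rw [kernelDefect_eq_mul hr]
  have := Real.rpow_le_one_of_one_le_of_nonpos (x := 1 + (y / r) ^ 2) (z := -(p / 2))
    (by linarith [sq_nonneg (y / r)]) (by linarith)
  exact mul_nonneg (by positivity) (by linarith)

lemma kernelDefect_le_rpow_neg : kernelDefect p y r ≤ r ^ (-p) :=
  sub_le_self _ (by positivity)

lemma sq_mul_kernelDefect_le (hp : 0 ≤ p) (hr : 0 < r) :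
    r ^ 2 * kernelDefect p y r ≤ p / 2 * (y ^ 2 * r ^ (-p)) := by
  rw [kernelDefect_eq_mul hr]
  calc r ^ 2 * (r ^ (-p) * (1 - (1 + (y / r) ^ 2) ^ (-(p / 2))))
      ≤ r ^ 2 * (r ^ (-p) * (p / 2 * (y / r) ^ 2)) := by
        gcongr
        exact one_sub_one_add_rpow_neg_le (by linarith [sq_nonneg (y / r)]) (by linarith)
    _ = p / 2 * (y ^ 2 * r ^ (-p)) := by field_simp

lemma sq_mul_abs_kernelDefect_le (hp : 0 ≤ p) (hr : 0 ≤ r) :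
    r ^ 2 * |kernelDefect p y r| ≤ (1 + p / 2) * (min (r ^ 2) (y ^ 2) * r ^ (-p)) := by
  rcases hr.eq_or_lt with rfl | hr
  · simp [min_eq_left (sq_nonneg y)]
  rw [abs_of_nonneg (kernelDefect_nonneg hp hr)]
  rcases le_total (r ^ 2) (y ^ 2) with h | h
  · rw [min_eq_left h]
    have hle : r ^ 2 * kernelDefect p y r ≤ r ^ 2 * r ^ (-p) := by
      gcongr
      exact kernelDefect_le_rpow_neg
    have : 0 ≤ p / 2 * (r ^ 2 * r ^ (-p)) := by positivity
    linarith
  · rw [min_eq_right h]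
    have : 0 ≤ y ^ 2 * r ^ (-p) := by positivity
    linarith [sq_mul_kernelDefect_le (y := y) hp hr]

lemma min_sq_mul_rpow_eq_scale (hy : 0 < y) (hr : 0 ≤ r) :
    min (r ^ 2) (y ^ 2) * r ^ (-p) =
      y ^ (2 - p) * (min ((y⁻¹ * r) ^ 2) 1 * (y⁻¹ * r) ^ (-p)) := by
  have hmin : min (r ^ 2) (y ^ 2) = y ^ 2 * min ((y⁻¹ * r) ^ 2) 1 := by
    rw [mul_min_of_nonneg _ _ (sq_nonneg y), mul_one, ← mul_pow, mul_inv_cancel_left₀ hy.ne']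
  have hpow : r ^ (-p) = y ^ (-p) * (y⁻¹ * r) ^ (-p) := by
    rw [← Real.mul_rpow hy.le (by positivity), mul_inv_cancel_left₀ hy.ne']
  rw [hmin, hpow, sub_eq_add_neg, Real.rpow_add hy, Real.rpow_two]
  ring

end RadialKernel

section TruncatedMoment

variable {E : Type*} [NormedAddCommGroup E] [NormedSpace ℝ E] [MeasurableSpace E] (μ : Measure E)

/-- The integral of `min(|z|², 1)` against the density `|z|^{-(d+2s)}` of the `2s`-stable Lévy
measure, where `d` is the dimension. -/
def truncatedSecondMoment (s : ℝ) : ℝ :=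
  ∫ z : E, min (‖z‖ ^ 2) 1 * ‖z‖ ^ (-(finrank ℝ E + 2 * s)) ∂μ

lemma truncatedSecondMoment_nonneg (s : ℝ) : 0 ≤ truncatedSecondMoment μ s :=
  integral_nonneg fun z => by positivity

variable [FiniteDimensional ℝ E] [BorelSpace E] [μ.IsAddHaarMeasure]

lemma integrable_min_norm_pow_mul_rpow [Nontrivial E] {k : ℕ} {t : ℝ} (ht : 0 < t) (htk : t < k) :
    Integrable (fun z : E => min (‖z‖ ^ k) 1 * ‖z‖ ^ (-(finrank ℝ E + t))) μ := by
  rw [integrable_fun_norm_addHaar μ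
    (f := fun r : ℝ => min (r ^ k) 1 * r ^ (-(finrank ℝ E + t))),
    ← Ioc_union_Ioi_eq_Ioi zero_le_one]
  have hjac : ∀ r : ℝ, 0 < r →
      r ^ (finrank ℝ E - 1) * r ^ (-(finrank ℝ E + t)) = r ^ (-1 - t) := by
    intro r hr
    rw [← Real.rpow_natCast, ← Real.rpow_add hr, Nat.cast_sub finrank_pos]
    congr 1
    push_cast
    ring
  refine IntegrableOn.union ?_ ?_
  · rw [integrableOn_Ioc_iff_integrableOn_Ioo]
    refine ((intervalIntegral.integrableOn_Ioo_rpow_iff (s := k - 1 - t) one_pos).2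
      (by linarith)).congr_fun (fun r hr => ?_) measurableSet_Ioo
    dsimp only
    rw [smul_eq_mul, min_eq_left (pow_le_one₀ hr.1.le hr.2.le), mul_left_comm, hjac r hr.1,
      ← Real.rpow_natCast, ← Real.rpow_add hr.1]
    congr 1
    ring
  · refine (integrableOn_Ioi_rpow_of_lt (a := -1 - t) (by linarith) one_pos).congr_fun
      (fun r hr => ?_) measurableSet_Ioi
    dsimp only
    rw [smul_eq_mul, min_eq_right (one_le_pow₀ (le_of_lt hr)), one_mul,
      hjac r (one_pos.trans hr)]

lemma integrable_min_norm_sq_mul_rpow [Nontrivial E] {s y : ℝ} (hs : s ∈ Ioo (0 : ℝ) 1)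
    (hy : 0 < y) :
    Integrable (fun z : E => min (‖z‖ ^ 2) (y ^ 2) * ‖z‖ ^ (-(finrank ℝ E + 2 * s))) μ := by
  have hunit := integrable_min_norm_pow_mul_rpow μ (k := 2) (t := 2 * s) (by linarith [hs.1])
    (by push_cast; linarith [hs.2])
  refine ((hunit.comp_smul (inv_ne_zero hy.ne')).const_mul
    (y ^ (2 - (finrank ℝ E + 2 * s)))).congr (ae_of_all _ fun z => ?_)
  dsimp only
  rw [norm_smul, norm_inv, Real.norm_of_nonneg hy.le,
    min_sq_mul_rpow_eq_scale hy (norm_nonneg z)]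

lemma integral_min_norm_sq_mul_rpow {y : ℝ} (hy : 0 < y) (s : ℝ) :
    ∫ z : E, min (‖z‖ ^ 2) (y ^ 2) * ‖z‖ ^ (-(finrank ℝ E + 2 * s)) ∂μ =
      y ^ (2 - 2 * s) * truncatedSecondMoment μ s := by
  have hscale := Measure.integral_comp_inv_smul_of_nonneg μ
    (fun z : E => min (‖z‖ ^ 2) 1 * ‖z‖ ^ (-(finrank ℝ E + 2 * s))) hy.le
  simp only [norm_smul, norm_inv, Real.norm_of_nonneg hy.le, smul_eq_mul] at hscale
  simp only [min_sq_mul_rpow_eq_scale hy (norm_nonneg _)]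
  rw [integral_const_mul, hscale, ← mul_assoc, ← Real.rpow_natCast, ← Real.rpow_add hy,
    truncatedSecondMoment]
  congr 2
  ring

end TruncatedMoment

section Integrability

variable {E F : Type*} [NormedAddCommGroup E] [NormedAddCommGroup F] {h : E → F} {k : ℕ} {B : ℝ}

lemma exists_norm_le_mul_min_norm_pow (hB : ∀ z, ‖h z‖ ≤ B)
    (hO : h =O[𝓝 0] fun z => ‖z‖ ^ k) : ∃ K, ∀ z, ‖h z‖ ≤ K * min (‖z‖ ^ k) 1 := by
  obtain ⟨A, hA, hbound⟩ := hO.exists_nonneg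
  obtain ⟨ρ, hρ, hball⟩ := Metric.eventually_nhds_iff.1 hbound.bound
  have hB0 : 0 ≤ B := (norm_nonneg _).trans (hB 0)
  have hclose : ∀ z, ‖z‖ < ρ → ‖h z‖ ≤ A * ‖z‖ ^ k := fun z hz => by
    simpa using hball (by simpa using hz)
  refine ⟨A + B + B / ρ ^ k, fun z => ?_⟩
  rw [mul_min_of_nonneg _ _ (by positivity), mul_one]
  refine le_min ?_ ((hB z).trans (by linarith [show 0 ≤ B / ρ ^ k by positivity]))
  rcases lt_or_ge ‖z‖ ρ with hz | hz
  · refine (hclose z hz).trans ?_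
    gcongr
    linarith [show 0 ≤ B / ρ ^ k by positivity]
  · calc ‖h z‖ ≤ B / ρ ^ k * ρ ^ k := by
          rw [div_mul_cancel₀ _ (pow_pos hρ k).ne']
          exact hB z
      _ ≤ (A + B + B / ρ ^ k) * ‖z‖ ^ k := by
          gcongr
          linarith

lemma integrable_norm_rpow_smul [NormedSpace ℝ E] [FiniteDimensional ℝ E] [Nontrivial E]
    [MeasurableSpace E] [BorelSpace E] {μ : Measure E} [μ.IsAddHaarMeasure] [NormedSpace ℝ F]
    {t : ℝ} (ht : 0 < t) (htk : t < k) (hh : AEStronglyMeasurable h μ) (hB : ∀ z, ‖h z‖ ≤ B)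
    (hO : h =O[𝓝 0] fun z => ‖z‖ ^ k) :
    Integrable (fun z => ‖z‖ ^ (-(finrank ℝ E + t)) • h z) μ := by
  obtain ⟨K, hK⟩ := exists_norm_le_mul_min_norm_pow hB hO
  have hmeas : Measurable fun z : E => ‖z‖ ^ (-(finrank ℝ E + t)) := by fun_prop
  refine ((integrable_min_norm_pow_mul_rpow μ ht htk).const_mul K).mono'
    (hmeas.aestronglyMeasurable.smul hh) (ae_of_all _ fun z => ?_)
  have hpow : 0 ≤ ‖z‖ ^ (-(finrank ℝ E + t)) := by positivity
  rw [norm_smul, Real.norm_of_nonneg hpow, ← mul_assoc, mul_comm]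
  gcongr
  exact hK z

end Integrability

section SecondDifference

variable {E F : Type*} [NormedAddCommGroup E] [NormedAddCommGroup F] [NormedSpace ℝ F]
  {f : E → F} {x z : E} {r M : ℝ}

/-- The symmetric second difference of `f` at `x` with increment `z`. -/
def symmSecondDiff (f : E → F) (x z : E) : F := f (x + z) + f (x - z) - (2 : ℝ) • f x

lemma isBigO_norm_pow_one_of_hasFDerivAt [NormedSpace ℝ E] {f' : E →L[ℝ] F}
    (hf' : HasFDerivAt f f' x) : (fun z => f (x + z) - f x) =O[𝓝 0] fun z => ‖z‖ ^ 1 := by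
  have htranslate : Tendsto (fun z => x + z) (𝓝 0) (𝓝 x) := by
    simpa using (continuous_const_add x).tendsto 0
  simpa [Function.comp_def] using (hf'.isBigO_sub.comp_tendsto htranslate).norm_right

lemma integrable_norm_rpow_smul_sub_of_hasFDerivAt [NormedSpace ℝ E] [FiniteDimensional ℝ E]
    [Nontrivial E] [MeasurableSpace E] [BorelSpace E] {μ : Measure E} [μ.IsAddHaarMeasure]
    {f' : E →L[ℝ] F} {t B : ℝ} (ht : t ∈ Ioo (0 : ℝ) 1) (hf : AEStronglyMeasurable f μ)
    (hB : ∀ z, ‖f z‖ ≤ B) (hf' : HasFDerivAt f f' x) :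
    Integrable (fun z => ‖z‖ ^ (-(finrank ℝ E + t)) • (f (x + z) - f x)) μ :=
  integrable_norm_rpow_smul ht.1 (by simpa using ht.2)
    ((hf.comp_measurePreserving (measurePreserving_add_left μ x)).sub aestronglyMeasurable_const)
    (fun z => norm_sub_le_of_le (hB (x + z)) (hB x)) (isBigO_norm_pow_one_of_hasFDerivAt hf')

lemma norm_sub_sub_le_of_lipschitz_fderiv [NormedSpace ℝ E] {f' : E → E →L[ℝ] F}
    (hf' : ∀ w ∈ Metric.ball x r, HasFDerivAt f (f' w) w)
    (hLip : ∀ w ∈ Metric.ball x r, ‖f' w - f' x‖ ≤ M * ‖w - x‖) (hz : ‖z‖ < r) :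
    ‖f (x + z) - f x - f' x z‖ ≤ M * ‖z‖ ^ 2 := by
  rcases eq_or_ne z 0 with rfl | hz0
  · simp
  have hmem : x + z ∈ Metric.closedBall x ‖z‖ := by simp
  have hsub := Metric.closedBall_subset_ball (x := x) hz
  have hM : 0 ≤ M := nonneg_of_mul_nonneg_left
    (by simpa using (norm_nonneg _).trans (hLip (x + z) (hsub hmem))) (norm_pos_iff.2 hz0)
  have hbound : ∀ w ∈ Metric.closedBall x ‖z‖, ‖f' w - f' x‖ ≤ M * ‖z‖ := fun w hw =>
    (hLip w (hsub hw)).trans (by gcongr; exact mem_closedBall_iff_norm.1 hw)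
  have := (convex_closedBall x ‖z‖).norm_image_sub_le_of_norm_hasFDerivWithin_le'
    (fun w hw => (hf' w (hsub hw)).hasFDerivWithinAt) hbound
    (Metric.mem_closedBall_self (norm_nonneg z)) hmem
  rwa [add_sub_cancel_left, mul_assoc, ← sq] at this

lemma norm_symmSecondDiff_le_of_lipschitz_fderiv [NormedSpace ℝ E] {f' : E → E →L[ℝ] F}
    (hf' : ∀ w ∈ Metric.ball x r, HasFDerivAt f (f' w) w)
    (hLip : ∀ w ∈ Metric.ball x r, ‖f' w - f' x‖ ≤ M * ‖w - x‖) (hz : ‖z‖ < r) :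
    ‖symmSecondDiff f x z‖ ≤ 2 * M * ‖z‖ ^ 2 := by
  have hpos := norm_sub_sub_le_of_lipschitz_fderiv hf' hLip hz
  have hneg := norm_sub_sub_le_of_lipschitz_fderiv hf' hLip (z := -z) (by rwa [norm_neg])
  rw [norm_neg] at hneg
  have hsplit : symmSecondDiff f x z =
      (f (x + z) - f x - f' x z) + (f (x + -z) - f x - f' x (-z)) := by
    rw [symmSecondDiff, two_smul, map_neg, ← sub_eq_add_neg]
    abel
  rw [hsplit]
  linarith [norm_add_le (f (x + z) - f x - f' x z) (f (x + -z) - f x - f' x (-z))]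

lemma norm_symmSecondDiff_le_of_bounded {B : ℝ} (hr : 0 < r) (hM : 0 ≤ M) (hB : ∀ z, ‖f z‖ ≤ B)
    (hloc : ∀ z, ‖z‖ < r → ‖symmSecondDiff f x z‖ ≤ M * ‖z‖ ^ 2) (z : E) :
    ‖symmSecondDiff f x z‖ ≤ (M + 4 * B / r ^ 2) * ‖z‖ ^ 2 := by
  have hB0 : 0 ≤ B := (norm_nonneg _).trans (hB x)
  rcases lt_or_ge ‖z‖ r with hz | hz
  · refine (hloc z hz).trans ?_
    gcongr
    exact le_add_of_nonneg_right (by positivity)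
  · have htriangle : ‖symmSecondDiff f x z‖ ≤ ‖f (x + z)‖ + ‖f (x - z)‖ + 2 * ‖f x‖ := by
      refine (norm_sub_le _ _).trans ?_
      rw [norm_smul, Real.norm_two]
      gcongr
      exact norm_add_le _ _
    calc ‖symmSecondDiff f x z‖ ≤ 4 * B := by linarith [hB (x + z), hB (x - z), hB x]
      _ = 4 * B / r ^ 2 * r ^ 2 := by rw [div_mul_cancel₀ _ (pow_pos hr 2).ne']
      _ ≤ (M + 4 * B / r ^ 2) * ‖z‖ ^ 2 := by
          gcongr
          exact le_add_of_nonneg_left hM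

end SecondDifference

lemma two_smul_integral_smul_of_even {G F : Type*} [AddGroup G] [MeasurableSpace G]
    [MeasurableNeg G] {μ : Measure G} [μ.IsNegInvariant] [NormedAddCommGroup F] [NormedSpace ℝ F]
    {w : G → ℝ} {h : G → F} (hw : Function.Even w) (hwh : Integrable (fun z => w z • h z) μ) :
    (2 : ℝ) • ∫ z, w z • h z ∂μ = ∫ z, w z • (h z + h (-z)) ∂μ := by
  have hreflect := integral_neg_eq_self (fun z => w z • h z) μ
  simp only [hw _] at hreflect
  have hint : Integrable (fun z => w z • h (-z)) μ := by simpa only [hw _] using hwh.comp_neg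
  simp only [smul_add]
  rw [integral_add hwh hint, hreflect, two_smul]

section Extension

variable {E : Type*} [NormedAddCommGroup E] [NormedSpace ℝ E] {s c y : ℝ}

/-- The Poisson kernel `P(z, y) = c y^{2s} (|z|² + y²)^{-(d+2s)/2}` of the upper half space over a
`d`-dimensional space `E`, with the normalising constant `c` as a parameter. -/
def extensionKernel (s c y : ℝ) (z : E) : ℝ :=
  c * y ^ (2 * s) * (‖z‖ ^ 2 + y ^ 2) ^ (-((finrank ℝ E + 2 * s) / 2))

/-- The kernel `P(z, y) - c y^{2s} |z|^{-(d+2s)}` representing the error of the expansion as an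
integral against the first difference of the boundary datum. -/
def expansionErrorKernel (s c y : ℝ) (z : E) : ℝ :=
  extensionKernel s c y z - c * y ^ (2 * s) * ‖z‖ ^ (-(finrank ℝ E + 2 * s))

lemma even_expansionErrorKernel : Function.Even (expansionErrorKernel (E := E) s c y) := fun z => by
  simp only [expansionErrorKernel, extensionKernel, norm_neg]

lemma abs_expansionErrorKernel (z : E) :
    |expansionErrorKernel s c y z| =
      |c * y ^ (2 * s)| * |kernelDefect (finrank ℝ E + 2 * s) y ‖z‖| := by
  rw [expansionErrorKernel, extensionKernel, kernelDefect, mul_assoc, ← abs_mul, ← abs_neg]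
  congr 1
  ring

lemma sq_mul_abs_expansionErrorKernel_le (hs : 0 ≤ s) (z : E) :
    ‖z‖ ^ 2 * |expansionErrorKernel s c y z| ≤
      |c * y ^ (2 * s)| * (1 + (finrank ℝ E + 2 * s) / 2) *
        (min (‖z‖ ^ 2) (y ^ 2) * ‖z‖ ^ (-(finrank ℝ E + 2 * s))) := by
  have hp : 0 ≤ finrank ℝ E + 2 * s := by positivity
  rw [abs_expansionErrorKernel, mul_left_comm, mul_assoc]
  exact mul_le_mul_of_nonneg_left (sq_mul_abs_kernelDefect_le hp (norm_nonneg z)) (abs_nonneg _)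

variable {F : Type*} [NormedAddCommGroup F] [NormedSpace ℝ F] {f : E → F} {x : E} {B M : ℝ}

lemma expansionErrorKernel_smul_sub (z : E) :
    expansionErrorKernel s c y z • (f (x + z) - f x) =
      extensionKernel s c y z • f (x + z) - extensionKernel s c y z • f x -
        (c * y ^ (2 * s)) • ‖z‖ ^ (-(finrank ℝ E + 2 * s)) • (f (x + z) - f x) := by
  rw [expansionErrorKernel, sub_smul, smul_sub (extensionKernel s c y z), mul_smul]

variable [MeasurableSpace E] {μ : Measure E}

lemma extensionKernel_const_eq_inv (hP : ∫ z : E, extensionKernel s c 1 z ∂μ = 1) :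
    c = (∫ z : E, extensionKernel s 1 1 z ∂μ)⁻¹ := by
  refine eq_inv_of_mul_eq_one_left ?_
  rw [← integral_const_mul]
  simpa only [extensionKernel, mul_assoc, one_mul] using hP

lemma integrable_extensionKernel (hP : ∫ z : E, extensionKernel s c y z ∂μ = 1) :
    Integrable (extensionKernel (E := E) s c y) μ :=
  .of_integral_ne_zero (by rw [hP]; exact one_ne_zero)

lemma integrable_extensionKernel_smul {h : E → F} (hh : AEStronglyMeasurable h μ)
    (hB : ∀ z, ‖h z‖ ≤ B) (hP : ∫ z : E, extensionKernel s c y z ∂μ = 1) :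
    Integrable (fun z => extensionKernel s c y z • h z) μ :=
  (integrable_extensionKernel hP).smul_of_top_left (memLp_top_of_bound hh B (ae_of_all _ hB))

lemma integrable_expansionErrorKernel_smul_sub
    (hfP : Integrable (fun z => extensionKernel s c y z • f (x + z)) μ)
    (hint : Integrable (fun z => ‖z‖ ^ (-(finrank ℝ E + 2 * s)) • (f (x + z) - f x)) μ)
    (hP : ∫ z : E, extensionKernel s c y z ∂μ = 1) :
    Integrable (fun z => expansionErrorKernel s c y z • (f (x + z) - f x)) μ := by
  simp only [expansionErrorKernel_smul_sub]
  exact (hfP.sub ((integrable_extensionKernel hP).smul_const (f x))).sub (hint.smul _)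

variable [CompleteSpace F]

lemma expansion_error_eq_integral
    (hfP : Integrable (fun z => extensionKernel s c y z • f (x + z)) μ)
    (hint : Integrable (fun z => ‖z‖ ^ (-(finrank ℝ E + 2 * s)) • (f (x + z) - f x)) μ)
    (hP : ∫ z : E, extensionKernel s c y z ∂μ = 1) :
    ∫ z, extensionKernel s c y z • f (x + z) ∂μ - f x -
        y ^ (2 * s) • c • ∫ z, ‖z‖ ^ (-(finrank ℝ E + 2 * s)) • (f (x + z) - f x) ∂μ =
      ∫ z, expansionErrorKernel s c y z • (f (x + z) - f x) ∂μ := by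
  have hconst : Integrable (fun z => extensionKernel s c y z • f x) μ :=
    (integrable_extensionKernel hP).smul_const _
  have hmass : ∫ z, extensionKernel s c y z • f x ∂μ = f x := by
    rw [integral_smul_const, hP, one_smul]
  simp only [expansionErrorKernel_smul_sub]
  rw [integral_sub (by exact hfP.sub hconst) (by exact hint.smul _), integral_sub hfP hconst,
    hmass, integral_smul, smul_smul, mul_comm c]

lemma norm_expansion_error_le [FiniteDimensional ℝ E] [Nontrivial E] [BorelSpace E]
    [μ.IsAddHaarMeasure] (hs : s ∈ Ioo (0 : ℝ) 1) (hy : 0 < y) (hM : 0 ≤ M)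
    (hΔ : ∀ z, ‖symmSecondDiff f x z‖ ≤ 2 * M * ‖z‖ ^ 2)
    (hfP : Integrable (fun z => extensionKernel s c y z • f (x + z)) μ)
    (hint : Integrable (fun z => ‖z‖ ^ (-(finrank ℝ E + 2 * s)) • (f (x + z) - f x)) μ)
    (hP : ∫ z : E, extensionKernel s c y z ∂μ = 1) :
    ‖∫ z, extensionKernel s c y z • f (x + z) ∂μ - f x -
        y ^ (2 * s) • c • ∫ z, ‖z‖ ^ (-(finrank ℝ E + 2 * s)) • (f (x + z) - f x) ∂μ‖ ≤
      |c| * (1 + (finrank ℝ E + 2 * s) / 2) * truncatedSecondMoment μ s * M * y ^ 2 := by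
  set K := 2 * M * (|c * y ^ (2 * s)| * (1 + (finrank ℝ E + 2 * s) / 2)) with hK
  have hpointwise : ∀ z, ‖expansionErrorKernel s c y z • symmSecondDiff f x z‖ ≤
      K * (min (‖z‖ ^ 2) (y ^ 2) * ‖z‖ ^ (-(finrank ℝ E + 2 * s))) := fun z =>
    calc ‖expansionErrorKernel s c y z • symmSecondDiff f x z‖
        = |expansionErrorKernel s c y z| * ‖symmSecondDiff f x z‖ := norm_smul _ _
      _ ≤ |expansionErrorKernel s c y z| * (2 * M * ‖z‖ ^ 2) := by
          gcongr
          exact hΔ z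
      _ = 2 * M * (‖z‖ ^ 2 * |expansionErrorKernel s c y z|) := by ring
      _ ≤ _ := by
          rw [hK, mul_assoc (2 * M)]
          exact mul_le_mul_of_nonneg_left (sq_mul_abs_expansionErrorKernel_le hs.1.le z)
            (by positivity)
  have hsymm : (2 : ℝ) • ∫ z, expansionErrorKernel s c y z • (f (x + z) - f x) ∂μ =
      ∫ z, expansionErrorKernel s c y z • symmSecondDiff f x z ∂μ := by
    rw [two_smul_integral_smul_of_even even_expansionErrorKernel
      (integrable_expansionErrorKernel_smul_sub hfP hint hP)]
    congr! 3 with z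
    rw [symmSecondDiff, two_smul, ← sub_eq_add_neg]
    abel
  have hbound := norm_integral_le_of_norm_le
    ((integrable_min_norm_sq_mul_rpow μ hs hy).const_mul K) (ae_of_all _ hpointwise)
  rw [← hsymm, ← expansion_error_eq_integral hfP hint hP, norm_smul, Real.norm_two,
    integral_const_mul, integral_min_norm_sq_mul_rpow μ hy] at hbound
  have hscale : y ^ (2 * s) * y ^ (2 - 2 * s) = y ^ 2 := by
    rw [← Real.rpow_add hy, add_sub_cancel, Real.rpow_two]
  rw [hK, abs_mul, abs_of_pos (Real.rpow_pos_of_pos hy _)] at hbound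
  linear_combination hbound / 2 +
    |c| * (1 + (finrank ℝ E + 2 * s) / 2) * truncatedSecondMoment μ s * M * hscale

end Extension

theorem global_expansion_of_extension_general {E F : Type*} [NormedAddCommGroup E]
    [NormedSpace ℝ E] [FiniteDimensional ℝ E] [Nontrivial E] [MeasurableSpace E] [BorelSpace E]
    (μ : Measure E) [μ.IsAddHaarMeasure] [NormedAddCommGroup F] [NormedSpace ℝ F]
    [CompleteSpace F] {s r : ℝ} (hs : s ∈ Ioo (0 : ℝ) (1 / 2)) (hr : 0 < r) :
    ∃ C > 0, ∀ (f : E → F) (f' : E → E →L[ℝ] F) (x : E) (c M0 M2 : ℝ),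
      AEStronglyMeasurable f μ →
      (∀ z, ‖f z‖ ≤ M0) →
      (∀ w ∈ Metric.ball x r, HasFDerivAt f (f' w) w) →
      (∀ w ∈ Metric.ball x r, ‖f' w - f' x‖ ≤ M2 * ‖w - x‖) →
      (∀ y, 0 < y → ∫ z : E, extensionKernel s c y z ∂μ = 1) →
      Integrable (fun z => ‖z‖ ^ (-(finrank ℝ E + 2 * s)) • (f (x + z) - f x)) μ ∧
        ∀ y, 0 < y →
          ‖∫ z, extensionKernel s c y z • f (x + z) ∂μ - f x -
              y ^ (2 * s) • c • ∫ z, ‖z‖ ^ (-(finrank ℝ E + 2 * s)) • (f (x + z) - f x) ∂μ‖ ≤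
            C * y ^ 2 * (M0 + M2) := by
  set I := ∫ z : E, extensionKernel s 1 1 z ∂μ
  set A := |I⁻¹| * (1 + (finrank ℝ E + 2 * s) / 2) * truncatedSecondMoment μ s
  have hA : 0 ≤ A := by
    have := truncatedSecondMoment_nonneg μ s
    have := hs.1
    positivity
  refine ⟨A * (1 + 2 / r ^ 2) + 1, by positivity, fun f f' x c M0 M2 hf hM0 hf' hLip hP => ?_⟩
  have hM0_nonneg : 0 ≤ M0 := (norm_nonneg _).trans (hM0 x)
  have hM2_nonneg : 0 ≤ M2 := by
    obtain ⟨e, he⟩ := exists_norm_eq E (half_pos hr).le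
    have := (norm_nonneg _).trans (hLip (x + e) (by simp [he, hr]))
    rw [add_sub_cancel_left, he] at this
    exact nonneg_of_mul_nonneg_left this (half_pos hr)
  have hshift : AEStronglyMeasurable (fun z => f (x + z)) μ :=
    hf.comp_measurePreserving (measurePreserving_add_left μ x)
  have hint := integrable_norm_rpow_smul_sub_of_hasFDerivAt (t := 2 * s)
    ⟨by linarith [hs.1], by linarith [hs.2]⟩ hf hM0 (hf' x (Metric.mem_ball_self hr))
  refine ⟨hint, fun y hy => ?_⟩
  have hΔ : ∀ z, ‖symmSecondDiff f x z‖ ≤ 2 * (M2 + 2 * M0 / r ^ 2) * ‖z‖ ^ 2 := fun z =>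
    (norm_symmSecondDiff_le_of_bounded hr (by positivity) hM0
      (fun z => norm_symmSecondDiff_le_of_lipschitz_fderiv hf' hLip) z).trans_eq (by ring)
  refine (norm_expansion_error_le ⟨hs.1, by linarith [hs.2]⟩ hy (by positivity) hΔ
    (integrable_extensionKernel_smul hshift (fun z => hM0 (x + z)) (hP y hy)) hint
    (hP y hy)).trans ?_
  rw [extensionKernel_const_eq_inv (hP 1 one_pos)]
  calc A * (M2 + 2 * M0 / r ^ 2) * y ^ 2
      ≤ A * ((1 + 2 / r ^ 2) * (M0 + M2)) * y ^ 2 := by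
        gcongr
        have : 0 ≤ 2 / r ^ 2 * M2 := by positivity
        linear_combination this + hM0_nonneg
    _ ≤ (A * (1 + 2 / r ^ 2) + 1) * y ^ 2 * (M0 + M2) := by
        have : 0 ≤ y ^ 2 * (M0 + M2) := by positivity
        linear_combination this

/-- **Lemma 2.1 (global expansion).** For bounded `f` that is `C^{1,1}` in `B_1`, the
Poisson extension `u(x,y) = ∫ f(x+z) P(z,y) dz` to the upper half space satisfies
`u(x,y) = f(x) + y^{1-a} g(x) + O(y²)` for `x ∈ B_{1/2}`, where
`g(x) = C_{n,a} ∫ (f(x+z) - f(x)) |z|^{-(n+1-a)} dz` (here `1 - a = 2s`, `n+1-a = n+2s`). -/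
theorem global_expansion_of_extension (n : ℕ) (hn : 1 ≤ n) (s : ℝ)
    (hs : s ∈ Ioo (0 : ℝ) (1/2)) :
    ∃ C > 0, ∀ (f : En n → ℝ) (f' : En n → (En n →L[ℝ] ℝ)) (Cna M0 M1 M2 : ℝ),
      Measurable f →
      (∀ x : En n, |f x| ≤ M0) →
      (∀ x ∈ flatBall n 1, HasFDerivAt f (f' x) x) →
      (∀ x ∈ flatBall n 1, ‖f' x‖ ≤ M1) →
      (∀ x ∈ flatBall n 1, ∀ x' ∈ flatBall n 1, ‖f' x - f' x'‖ ≤ M2 * ‖x - x'‖) →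
      0 < Cna →
      (∀ y : ℝ, 0 < y →
        (∫ z : En n, Cna * y ^ (2*s) * (‖z‖^2 + y^2) ^ (-(((n : ℝ) + 2*s)/2))) = 1) →
      ∀ x ∈ flatBall n (1/2),
        Integrable (fun z : En n => (f (x + z) - f x) * ‖z‖ ^ (-((n : ℝ) + 2*s))) ∧
        ∀ y : ℝ, 0 < y →
          |(∫ z : En n, f (x + z) * (Cna * y ^ (2*s) * (‖z‖^2 + y^2) ^ (-(((n : ℝ) + 2*s)/2))))
            - f x
            - y ^ (2*s) * (Cna * ∫ z : En n, (f (x + z) - f x) * ‖z‖ ^ (-((n : ℝ) + 2*s)))| ≤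
            C * y^2 * (M0 + M1 + M2) := by
  have : Nonempty (Fin n) := ⟨⟨0, hn⟩⟩
  obtain ⟨C, hC, hexpansion⟩ := global_expansion_of_extension_general (F := ℝ)
    (volume : Measure (En n)) hs one_half_pos
  refine ⟨C, hC, fun f f' c M0 M1 M2 hf hM0 hf' hM1 hLip _ hP x hx => ?_⟩
  have hball : Metric.ball x (1 / 2) ⊆ flatBall n 1 := fun w hw => by
    have := norm_add_le (w - x) x
    rw [sub_add_cancel] at this
    exact this.trans_lt (by linarith [mem_ball_iff_norm.1 hw, show ‖x‖ < 1 / 2 from hx])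
  have hx1 := hball (Metric.mem_ball_self one_half_pos)
  obtain ⟨hint, herr⟩ := hexpansion f f' x c M0 M2 hf.aestronglyMeasurable hM0
    (fun w hw => hf' w (hball hw)) (fun w hw => hLip w (hball hw) x hx1)
    (by simpa only [extensionKernel, finrank_euclideanSpace_fin] using hP)
  simp only [extensionKernel, finrank_euclideanSpace_fin, smul_eq_mul,
    mul_comm _ (f _), mul_comm _ (f _ - f _), Real.norm_eq_abs] at hint herr
  refine ⟨hint, fun y hy => (herr y hy).trans ?_⟩
  gcongr
  linarith [(norm_nonneg _).trans (hM1 x hx1)]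

end
end

section
/- Let α ∈ (0,1) and let X₀ = (x₀,y₀) be any point with |x₀|² + y₀² = 1 and y₀ > 0. There exists a constant C > 0, depending only on n, a and α, such that the function B(X) = C(1 − |X|²)^α + |X − X₀|^α satisfies ΔB(X) + (a/y) ∂_y B(X) ≤ 0 at every point X = (x,y) ∈ B_1^+ (equivalently, div(y^a ∇B) ≤ 0 in B_1^+). -/
open Set Filter Topology MeasureTheory
open scoped RealInnerProductSpace

noncomputable section

/-!
Write `L u = Δu + (a/y) ∂_y u` and `w = 1 - |X|²`. On a function of `|X - Z|²` the chain rule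
evaluates `L` explicitly. Since `t ↦ t ^ α` is concave, `L (w ^ α) ≤ -2α(1 - α) w ^ (α - 2)`. In
`L (|X - X₀| ^ α)` the singular part of the drift is a positive multiple of `-a y₀ / y ≤ 0`, and
dropping it leaves at most `α(n + α + a) |X - X₀| ^ (α - 2)`. As `X₀` is not inside the unit ball,
`w ≤ 2 |X - X₀|`, so this is at most `4α(n + α + a) w ^ (α - 2)`, which `C w ^ α` compensates
for `C = 2(n + α + a) / (1 - α)`.
-/

/-- The weighted Laplacian `Δu + (a/y) ∂_y u = y^{-a} div(y^a ∇u)` at the point `p = (x, y)`;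
it takes the junk value `Δu` at `y = 0`. -/
def weightedLap {n : ℕ} (a : ℝ) (u : En n × ℝ → ℝ) (p : En n × ℝ) : ℝ :=
  lap u p + (a / p.2) * fderiv ℝ u p (0, 1)

/-- The squared Euclidean length `|∇u|²` of the gradient in the `n+1` variables `(x, y)`. -/
def gradSq {n : ℕ} (u : En n × ℝ → ℝ) (p : En n × ℝ) : ℝ :=
  (∑ i : Fin n, fderiv ℝ u p (EuclideanSpace.single i 1, 0) ^ 2) + fderiv ℝ u p (0, 1) ^ 2

/-- The squared Euclidean distance `|q - Z|²` in the `n+1` variables `(x, y)`; the norm of the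
product type `En n × ℝ` is the maximum norm and cannot be used here. -/
def sqDist {n : ℕ} (Z q : En n × ℝ) : ℝ :=
  ‖q.1 - Z.1‖ ^ 2 + (q.2 - Z.2) ^ 2

section Calculus

variable {E F : Type*} [NormedAddCommGroup E] [NormedSpace ℝ E] [NormedAddCommGroup F]
  [NormedSpace ℝ F]

lemma differentiableAt_fderiv_apply {u : E → F} {p : E} (hu : ContDiffAt ℝ 2 u p) (w : E) :
    DifferentiableAt ℝ (fun q => fderiv ℝ u q w) p :=
  ((hu.fderiv_right (m := 1) le_rfl).differentiableAt one_ne_zero).clm_apply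
    (differentiableAt_const w)

lemma eventually_differentiableAt {u : E → F} {p : E} (hu : ContDiffAt ℝ 1 u p) :
    ∀ᶠ q in 𝓝 p, DifferentiableAt ℝ u q :=
  (hu.eventually (by simp)).mono fun _ hq => hq.differentiableAt one_ne_zero

lemma fderiv_comp_apply {f : ℝ → ℝ} {u : E → ℝ} {p : E} (hf : DifferentiableAt ℝ f (u p))
    (hu : DifferentiableAt ℝ u p) (w : E) :
    fderiv ℝ (fun q => f (u q)) p w = deriv f (u p) * fderiv ℝ u p w := by
  have h : HasFDerivAt (fun q => f (u q)) (deriv f (u p) • fderiv ℝ u p) p :=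
    hf.hasDerivAt.comp_hasFDerivAt p hu.hasFDerivAt
  rw [h.fderiv, smul_apply, smul_eq_mul]

lemma fderiv_const_mul_apply {u : E → ℝ} {p : E} (c : ℝ) (w : E) :
    fderiv ℝ (fun q => c * u q) p w = c * fderiv ℝ u p w := by
  rw [show (fun q => c * u q) = c • u from rfl, fderiv_const_smul_field, Pi.smul_apply,
    smul_apply, smul_eq_mul]

end Calculus

section WeightedLaplacian

variable {n : ℕ} {u v : En n × ℝ → ℝ} {p : En n × ℝ} {f : ℝ → ℝ}

lemma D2_add (hu : ContDiffAt ℝ 2 u p) (hv : ContDiffAt ℝ 2 v p) (w : En n × ℝ) :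
    D2 (fun q => u q + v q) p w = D2 u p w + D2 v p w := by
  have hfderiv : (fun q => fderiv ℝ (fun q => u q + v q) q w) =ᶠ[𝓝 p]
      fun q => fderiv ℝ u q w + fderiv ℝ v q w := by
    filter_upwards [eventually_differentiableAt (hu.of_le one_le_two),
      eventually_differentiableAt (hv.of_le one_le_two)] with q hq hq'
    rw [fderiv_fun_add hq hq', add_apply]
  rw [D2, hfderiv.fderiv_eq, fderiv_fun_add (differentiableAt_fderiv_apply hu w)
    (differentiableAt_fderiv_apply hv w), add_apply, D2, D2]

lemma D2_const_mul (c : ℝ) (w : En n × ℝ) : D2 (fun q => c * u q) p w = c * D2 u p w := by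
  simp only [D2, fderiv_const_mul_apply]

lemma D2_comp (hf : ContDiffAt ℝ 2 f (u p)) (hu : ContDiffAt ℝ 2 u p) (w : En n × ℝ) :
    D2 (fun q => f (u q)) p w =
      deriv (deriv f) (u p) * fderiv ℝ u p w ^ 2 + deriv f (u p) * D2 u p w := by
  have hu₁ : DifferentiableAt ℝ u p := hu.differentiableAt two_ne_zero
  have hf' : DifferentiableAt ℝ (deriv f) (u p) := differentiableAt_fderiv_apply hf 1
  have hfu : DifferentiableAt ℝ (fun q => deriv f (u q)) p := hf'.comp p hu₁
  have hfderiv : (fun q => fderiv ℝ (fun q => f (u q)) q w) =ᶠ[𝓝 p]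
      fun q => deriv f (u q) * fderiv ℝ u q w := by
    filter_upwards [eventually_differentiableAt (hu.of_le one_le_two),
      hu.continuousAt.eventually (hf.eventually (by simp))] with q hq hfq
    exact fderiv_comp_apply (hfq.differentiableAt two_ne_zero) hq w
  rw [D2, hfderiv.fderiv_eq, fderiv_fun_mul hfu (differentiableAt_fderiv_apply hu w)]
  simp only [add_apply, smul_apply, smul_eq_mul, fderiv_comp_apply hf' hu₁, D2]
  ring

lemma weightedLap_add (a : ℝ) (hu : ContDiffAt ℝ 2 u p) (hv : ContDiffAt ℝ 2 v p) :
    weightedLap a (fun q => u q + v q) p = weightedLap a u p + weightedLap a v p := by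
  simp only [weightedLap, lap, D2_add hu hv, Finset.sum_add_distrib,
    fderiv_fun_add (hu.differentiableAt two_ne_zero) (hv.differentiableAt two_ne_zero), add_apply]
  ring

lemma weightedLap_const_mul (a c : ℝ) :
    weightedLap a (fun q => c * u q) p = c * weightedLap a u p := by
  simp only [weightedLap, lap, D2_const_mul, ← Finset.mul_sum, fderiv_const_mul_apply]
  ring

lemma weightedLap_comp (a : ℝ) (hf : ContDiffAt ℝ 2 f (u p)) (hu : ContDiffAt ℝ 2 u p) :
    weightedLap a (fun q => f (u q)) p =
      deriv (deriv f) (u p) * gradSq u p + deriv f (u p) * weightedLap a u p := by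
  simp only [weightedLap, lap, gradSq, D2_comp hf hu, Finset.sum_add_distrib, ← Finset.mul_sum,
    fderiv_comp_apply (hf.differentiableAt two_ne_zero) (hu.differentiableAt two_ne_zero)]
  ring

end WeightedLaplacian

section SquaredDistance

variable {n : ℕ} (Z p : En n × ℝ) {f : ℝ → ℝ}

lemma contDiff_sqDist {m : WithTop ℕ∞} : ContDiff ℝ m (sqDist Z) :=
  ((contDiff_fst.sub contDiff_const).norm_sq ℝ).add ((contDiff_snd.sub contDiff_const).pow 2)

lemma fderiv_sqDist_apply (w : En n × ℝ) :
    fderiv ℝ (sqDist Z) p w = 2 * (inner ℝ (p.1 - Z.1) w.1 + (p.2 - Z.2) * w.2) := by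
  have hx := (hasFDerivAt_fst (𝕜 := ℝ) (p := p)).sub_const Z.1
  have hy := (hasFDerivAt_snd (𝕜 := ℝ) (p := p)).sub_const Z.2
  have h : HasFDerivAt (sqDist Z) _ p := hx.norm_sq.add (hy.pow 2)
  rw [h.fderiv]
  simp only [Nat.add_one_sub_one, pow_one, nsmul_eq_mul, Nat.cast_ofNat, add_apply, smul_apply,
    ContinuousLinearMap.comp_apply, ContinuousLinearMap.coe_fst', coe_innerSL_apply,
    ContinuousLinearMap.coe_snd', smul_eq_mul]
  ring

lemma D2_sqDist (w : En n × ℝ) : D2 (sqDist Z) p w = 2 * (‖w.1‖ ^ 2 + w.2 ^ 2) := by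
  have hx := (hasFDerivAt_fst (𝕜 := ℝ) (p := p)).sub_const Z.1
  have hy := (hasFDerivAt_snd (𝕜 := ℝ) (p := p)).sub_const Z.2
  have h : HasFDerivAt (fun q => 2 * (inner ℝ (q.1 - Z.1) w.1 + (q.2 - Z.2) * w.2)) _ p :=
    ((hx.inner ℝ (hasFDerivAt_const w.1 p)).add (hy.mul_const w.2)).const_mul 2
  simp only [D2, fderiv_sqDist_apply]
  rw [h.fderiv]
  simp [← pow_two, mul_add]

lemma gradSq_sqDist : gradSq (sqDist Z) p = 4 * sqDist Z p := by
  simp only [gradSq, fderiv_sqDist_apply, sqDist, EuclideanSpace.inner_single_right,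
    EuclideanSpace.real_norm_sq_eq, inner_zero_right, PiLp.sub_apply, Real.ringHom_apply,
    one_mul, mul_one, mul_zero, add_zero, zero_add, mul_pow, ← Finset.mul_sum]
  ring

lemma lap_sqDist : lap (sqDist Z) p = 2 * (n + 1) := by
  simp only [lap, D2_sqDist, PiLp.norm_single, norm_one, norm_zero, Finset.sum_const,
    Finset.card_univ, Fintype.card_fin, nsmul_eq_mul]
  ring

lemma weightedLap_comp_sqDist (a : ℝ) (hf : ContDiffAt ℝ 2 f (sqDist Z p)) :
    weightedLap a (fun q => f (sqDist Z q)) p =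
      4 * sqDist Z p * deriv (deriv f) (sqDist Z p) +
        2 * (n + 1 + a * (p.2 - Z.2) / p.2) * deriv f (sqDist Z p) := by
  rw [weightedLap_comp a hf (contDiff_sqDist Z).contDiffAt, gradSq_sqDist, weightedLap,
    lap_sqDist, fderiv_sqDist_apply]
  simp only [inner_zero_right]
  ring

end SquaredDistance

section Barrier

variable {n : ℕ} {a α : ℝ} {Z p : En n × ℝ}

lemma weightedLap_one_sub_sqDist_rpow (hy : p.2 ≠ 0) (hp : sqDist 0 p ≠ 1) :
    weightedLap a (fun q => (1 - sqDist 0 q) ^ α) p =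
      -(α * (4 * (1 - α) * sqDist 0 p * (1 - sqDist 0 p) ^ (α - 2) +
        2 * (n + 1 + a) * (1 - sqDist 0 p) ^ (α - 1))) := by
  have hf : ContDiffAt ℝ 2 (fun t : ℝ => (1 - t) ^ α) (sqDist 0 p) :=
    (contDiffAt_const.sub contDiffAt_id).rpow_const_of_ne (sub_ne_zero.2 hp.symm)
  have hf' : deriv (fun t : ℝ => (1 - t) ^ α) = fun t => -(α * (1 - t) ^ (α - 1)) := by
    ext t
    rw [deriv_comp_const_sub (fun t : ℝ => t ^ α), Real.deriv_rpow_const]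
  have hf'' : deriv (fun t : ℝ => -(α * (1 - t) ^ (α - 1))) (sqDist 0 p) =
      α * (α - 1) * (1 - sqDist 0 p) ^ (α - 2) := by
    rw [deriv_comp_const_sub (fun t : ℝ => -(α * t ^ (α - 1))), deriv.fun_neg,
      deriv_const_mul_field, Real.deriv_rpow_const]
    ring_nf
  rw [weightedLap_comp_sqDist 0 p a hf, hf', hf'', Prod.snd_zero, sub_zero,
    mul_div_cancel_right₀ a hy]
  ring

lemma weightedLap_sqDist_rpow (hZ : sqDist Z p ≠ 0) (γ : ℝ) :
    weightedLap a (fun q => sqDist Z q ^ γ) p =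
      2 * γ * (n - 1 + 2 * γ + a * (p.2 - Z.2) / p.2) * sqDist Z p ^ (γ - 1) := by
  have hf : ContDiffAt ℝ 2 (fun t : ℝ => t ^ γ) (sqDist Z p) :=
    Real.contDiffAt_rpow_const_of_ne hZ
  have hf'' : deriv (fun t : ℝ => γ * t ^ (γ - 1)) (sqDist Z p) =
      γ * (γ - 1) * sqDist Z p ^ (γ - 2) := by
    rw [deriv_const_mul_field, Real.deriv_rpow_const]
    ring_nf
  have hmul : sqDist Z p * sqDist Z p ^ (γ - 2) = sqDist Z p ^ (γ - 1) := by
    rw [mul_comm, ← Real.rpow_add_one hZ]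
    ring_nf
  rw [weightedLap_comp_sqDist Z p a hf, Real.deriv_rpow_const', hf'']
  linear_combination 4 * γ * (γ - 1) * hmul

lemma one_sub_norm_sq_le {E : Type*} [SeminormedAddCommGroup E] {x z : E} (hx : ‖x‖ ≤ 1)
    (hz : 1 ≤ ‖z‖) : 1 - ‖x‖ ^ 2 ≤ 2 * ‖x - z‖ :=
  calc 1 - ‖x‖ ^ 2 = (1 + ‖x‖) * (1 - ‖x‖) := by ring
    _ ≤ 2 * (1 - ‖x‖) := by
      gcongr
      linarith
    _ ≤ 2 * ‖x - z‖ := by linarith [norm_sub_norm_le z x, norm_sub_rev x z]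

lemma sqDist_eq_norm_sq (Z p : En n × ℝ) : sqDist Z p = ‖WithLp.toLp 2 (p - Z)‖ ^ 2 := by
  simp [sqDist, WithLp.prod_norm_sq_eq_of_L2]

lemma sq_one_sub_sqDist_le (hp : sqDist 0 p ≤ 1) (hZ : 1 ≤ sqDist 0 Z) :
    (1 - sqDist 0 p) ^ 2 ≤ 4 * sqDist Z p := by
  have hp' : ‖WithLp.toLp 2 p‖ ≤ 1 := by simpa [sqDist_eq_norm_sq] using hp
  have hZ' : 1 ≤ ‖WithLp.toLp 2 Z‖ := by simpa [sqDist_eq_norm_sq] using hZ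
  have hle : 1 - sqDist 0 p ≤ 2 * ‖WithLp.toLp 2 (p - Z)‖ := by
    simpa [sqDist_eq_norm_sq] using one_sub_norm_sq_le hp' hZ'
  calc (1 - sqDist 0 p) ^ 2 ≤ (2 * ‖WithLp.toLp 2 (p - Z)‖) ^ 2 := by
        gcongr
    _ = 4 * sqDist Z p := by
        rw [sqDist_eq_norm_sq]
        ring

lemma sqDist_pos (hp : sqDist 0 p < 1) (hZ : 1 ≤ sqDist 0 Z) : 0 < sqDist Z p := by
  linarith [pow_pos (sub_pos.2 hp) 2, sq_one_sub_sqDist_le hp.le hZ]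

lemma rpow_half_sub_one_le {w ρ : ℝ} (hw : 0 < w) (h : w ^ 2 ≤ 4 * ρ) (hα : α ∈ Icc (0 : ℝ) 2) :
    ρ ^ (α / 2 - 1) ≤ 4 * w ^ (α - 2) :=
  calc ρ ^ (α / 2 - 1) ≤ ((w / 2) ^ 2) ^ (α / 2 - 1) :=
        Real.rpow_le_rpow_of_nonpos (by positivity) (by linarith) (by linarith [hα.2])
    _ = (w / 2) ^ (α - 2) := by
        rw [← Real.rpow_natCast_mul (by positivity)]
        congr 1
        push_cast
        ring
    _ = 2 ^ (2 - α) * w ^ (α - 2) := by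
        rw [Real.div_rpow hw.le zero_le_two, div_eq_inv_mul, ← Real.rpow_neg zero_le_two, neg_sub]
    _ ≤ 2 ^ (2 : ℝ) * w ^ (α - 2) := by
        gcongr
        · exact one_le_two
        · linarith [hα.1]
    _ = 4 * w ^ (α - 2) := by norm_num

lemma weightedLap_one_sub_sqDist_rpow_le (ha : 0 ≤ n + a) (hα : α ∈ Icc (0 : ℝ) 1)
    (hy : p.2 ≠ 0) (hp : sqDist 0 p < 1) :
    weightedLap a (fun q => (1 - sqDist 0 q) ^ α) p ≤
      -(2 * α * (1 - α)) * (1 - sqDist 0 p) ^ (α - 2) := by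
  rw [weightedLap_one_sub_sqDist_rpow hy hp.ne]
  obtain ⟨hα₀, hα₁⟩ := hα
  have hw : 0 < 1 - sqDist 0 p := sub_pos.2 hp
  have hmul : (1 - sqDist 0 p) ^ (α - 1) = (1 - sqDist 0 p) ^ (α - 2) * (1 - sqDist 0 p) := by
    rw [← Real.rpow_add_one hw.ne']
    ring_nf
  have hcoeff : 2 * (1 - α) ≤ 4 * (1 - α) * sqDist 0 p + 2 * (n + 1 + a) * (1 - sqDist 0 p) := by
    have hr : 0 ≤ sqDist 0 p := by unfold sqDist; positivity
    linarith [mul_nonneg (sub_nonneg.2 hα₁) hr, mul_nonneg hα₀ hw.le,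
      mul_nonneg ha hw.le]
  rw [hmul]
  linear_combination α * (1 - sqDist 0 p) ^ (α - 2) * hcoeff

lemma weightedLap_sqDist_rpow_half_le (ha : 0 ≤ a) (hα : α ∈ Icc (0 : ℝ) 2) (hy : 0 < p.2)
    (hp : sqDist 0 p < 1) (hZ : 1 ≤ sqDist 0 Z) (hZ₂ : 0 ≤ Z.2) :
    weightedLap a (fun q => sqDist Z q ^ (α / 2)) p ≤
      4 * α * (n + α + a) * (1 - sqDist 0 p) ^ (α - 2) := by
  have hw : 0 < 1 - sqDist 0 p := sub_pos.2 hp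
  have hρ : 0 < sqDist Z p := sqDist_pos hp hZ
  have hdrift : a * (p.2 - Z.2) / p.2 ≤ a := by
    rw [div_le_iff₀ hy]
    gcongr
    linarith
  have hα₀ := hα.1
  calc weightedLap a (fun q => sqDist Z q ^ (α / 2)) p
      = α * (n - 1 + α + a * (p.2 - Z.2) / p.2) * sqDist Z p ^ (α / 2 - 1) := by
        rw [weightedLap_sqDist_rpow hρ.ne']
        ring
    _ ≤ α * (n + α + a) * sqDist Z p ^ (α / 2 - 1) := by
        gcongr
        linarith
    _ ≤ α * (n + α + a) * (4 * (1 - sqDist 0 p) ^ (α - 2)) := by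
        gcongr
        exact rpow_half_sub_one_le hw (sq_one_sub_sqDist_le hp.le hZ) hα
    _ = 4 * α * (n + α + a) * (1 - sqDist 0 p) ^ (α - 2) := by ring

end Barrier

theorem barrier_for_lateral_boundary_general (n : ℕ) {a α : ℝ} (ha : 0 ≤ a)
    (hα : α ∈ Ioo (0 : ℝ) 1) :
    ∃ C > 0, ∀ Z : En n × ℝ, 1 ≤ sqDist 0 Z → 0 ≤ Z.2 → ∀ p ∈ halfBall n 1,
      weightedLap a (fun q => C * (1 - sqDist 0 q) ^ α + sqDist Z q ^ (α / 2)) p ≤ 0 := by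
  have hα₀ : 0 < α := hα.1
  have hα₁ : 0 < 1 - α := sub_pos.2 hα.2
  refine ⟨2 * (n + α + a) / (1 - α), by positivity, fun Z hZ hZ₂ p ⟨hpball, hy⟩ => ?_⟩
  have hp : sqDist 0 p < 1 := by simpa [sqDist] using hpball
  have hw : 0 < 1 - sqDist 0 p := sub_pos.2 hp
  have hcenter : ContDiffAt ℝ 2 (fun q : En n × ℝ => (1 - sqDist 0 q) ^ α) p :=
    (contDiffAt_const.sub (contDiff_sqDist 0).contDiffAt).rpow_const_of_ne hw.ne'
  have hboundary : ContDiffAt ℝ 2 (fun q => sqDist Z q ^ (α / 2)) p :=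
    (contDiff_sqDist Z).contDiffAt.rpow_const_of_ne (sqDist_pos hp hZ).ne'
  calc weightedLap a _ p
      = 2 * (n + α + a) / (1 - α) * weightedLap a (fun q => (1 - sqDist 0 q) ^ α) p +
          weightedLap a (fun q => sqDist Z q ^ (α / 2)) p := by
        rw [weightedLap_add a (contDiffAt_const.mul hcenter) hboundary,
          weightedLap_const_mul]
    _ ≤ 2 * (n + α + a) / (1 - α) * (-(2 * α * (1 - α)) * (1 - sqDist 0 p) ^ (α - 2)) +
          4 * α * (n + α + a) * (1 - sqDist 0 p) ^ (α - 2) := by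
        gcongr
        · exact weightedLap_one_sub_sqDist_rpow_le (by positivity) ⟨hα₀.le, hα.2.le⟩ hy.ne' hp
        · exact weightedLap_sqDist_rpow_half_le ha ⟨hα₀.le, by linarith⟩ hy hp hZ hZ₂
    _ = 0 := by
        field_simp
        ring

/-- **Lemma 4.1 (barrier for `(∂B_1)^+`).** For `α ∈ (0,1)` and `X₀ ∈ (∂B_1)^+` there is a
constant `C > 0`, depending only on `n`, `a` and `α`, such that
`B(X) = C (1-|X|²)^α + |X-X₀|^α` is a supersolution of `div(y^a ∇B) ≤ 0` in `B_1^+`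
(here `a = 1-2s`). -/
theorem barrier_for_lateral_boundary (n : ℕ) (hn : 1 ≤ n) (s : ℝ)
    (hs : s ∈ Ioo (0 : ℝ) (1/2)) (α : ℝ) (hα : α ∈ Ioo (0 : ℝ) 1) :
    ∃ C > 0, ∀ (x₀ : En n) (y₀ : ℝ), ‖x₀‖^2 + y₀^2 = 1 → 0 < y₀ →
      ∀ p ∈ halfBall n 1,
        lap (fun q : En n × ℝ =>
            C * (1 - (‖q.1‖^2 + q.2^2)) ^ α + (‖q.1 - x₀‖^2 + (q.2 - y₀)^2) ^ (α/2)) p +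
          ((1 - 2*s) / p.2) *
            fderiv ℝ (fun q : En n × ℝ =>
              C * (1 - (‖q.1‖^2 + q.2^2)) ^ α + (‖q.1 - x₀‖^2 + (q.2 - y₀)^2) ^ (α/2))
              p (0, 1) ≤ 0 := by
  obtain ⟨C, hC, hsuper⟩ :=
    barrier_for_lateral_boundary_general n (a := 1 - 2 * s) (by linarith [hs.2]) hα
  exact ⟨C, hC, fun x₀ y₀ h₀ hy₀ => by
    simpa [weightedLap, sqDist] using hsuper (x₀, y₀) (by simp [sqDist, h₀]) hy₀.le⟩

end
end
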